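/- (Independence) Let D be an n×n attack matrix with entries in {0,1} and let S ⊆ {1,…,n} be a set of indices such that D i j = 0 whenever exactly one of i, j lies in S (no attacks between S and its complement). Let v* be the unique fixed point of the categoriser map of D, and let w* be the unique fixed point of the categoriser map of the submatrix of D obtained by restricting rows and columns to S. Then v*_i = w*_i for every i ∈ S; in particular, for all i, j ∈ S, v*_i ≥ v*_j iff w*_i ≥ w*_j. -/

import Mathlib

/-!
The restriction of `vstar` to `S` is a fixed point of the categoriser map of the submatrix, because
attacks from outside `S` contribute nothing to the sums indexed by `S`. So the claim reduces to
uniqueness of nonnegative fixed points for a nonnegative matrix, `catF_fixed_unique`. If `x` and `y`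
are two such fixed points, both are positive; let `r` be the largest of all ratios `x i / y i` and
`y i / x i`, attained say as `x i = r * y i`. Then `y ≤ r • x` gives
`1 / y i = r / x i = r + ∑ j, D i j * (r * x j) ≥ r + ∑ j, D i j * y j = r - 1 + 1 / y i`,
so `r ≤ 1` and `x = y`.
-/

/-- The categoriser map of an attack matrix `D` on an arbitrary finite index type. -/
noncomputable def catF {ι : Type*} [Fintype ι] (D : ι → ι → ℝ) (v : ι → ℝ) : ι → ℝ :=
  fun i => 1 / (1 + ∑ j, D i j * v j)

theorem catF_fixed_pos {ι : Type*} [Fintype ι] {D : ι → ι → ℝ} (hD : ∀ i j, 0 ≤ D i j)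
    {x : ι → ℝ} (hx : ∀ i, 0 ≤ x i) (hfix : catF D x = x) (i : ι) :
    0 < x i ∧ x i * (1 + ∑ j, D i j * x j) = 1 := by
  have hs : 0 ≤ ∑ j, D i j * x j :=
    Finset.sum_nonneg fun j _ => mul_nonneg (hD i j) (hx j)
  have h : x i = 1 / (1 + ∑ j, D i j * x j) := (congrFun hfix i).symm
  refine ⟨?_, ?_⟩
  · rw [h]; positivity
  · rw [h]; exact one_div_mul_cancel (by positivity)

/-- A factor `r` with `y ≤ r • x` that is attained in the opposite direction, `x i = r * y i`, is at
most `1`. -/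
theorem catF_ratio_le_one {ι : Type*} [Fintype ι] {D : ι → ι → ℝ} (hD : ∀ i j, 0 ≤ D i j)
    {x y : ι → ℝ} (hx : ∀ i, 0 ≤ x i) (hy : ∀ i, 0 ≤ y i)
    (hfx : catF D x = x) (hfy : catF D y = y) {r : ℝ}
    (hle : ∀ j, y j ≤ r * x j) {i : ι} (hi : x i = r * y i) : r ≤ 1 := by
  obtain ⟨-, ex⟩ := catF_fixed_pos hD hx hfx i
  obtain ⟨py, ey⟩ := catF_fixed_pos hD hy hfy i
  have hs : ∑ j, D i j * y j ≤ r * ∑ j, D i j * x j := by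
    rw [Finset.mul_sum]
    refine Finset.sum_le_sum fun j _ => ?_
    rw [mul_left_comm]
    exact mul_le_mul_of_nonneg_left (hle j) (hD i j)
  rw [hi] at ex
  have h : y i * (r * (1 + ∑ j, D i j * x j)) = y i * (1 + ∑ j, D i j * y j) := by
    linear_combination ex - ey
  have h' := mul_left_cancel₀ py.ne' h
  linarith

theorem catF_fixed_unique {ι : Type*} [Fintype ι] {D : ι → ι → ℝ} (hD : ∀ i j, 0 ≤ D i j)
    {x y : ι → ℝ} (hx : ∀ i, 0 ≤ x i) (hy : ∀ i, 0 ≤ y i)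
    (hfx : catF D x = x) (hfy : catF D y = y) : x = y := by
  rcases isEmpty_or_nonempty ι with hι | hι
  · exact Subsingleton.elim _ _
  have px := fun i => (catF_fixed_pos hD hx hfx i).1
  have py := fun i => (catF_fixed_pos hD hy hfy i).1
  obtain ⟨i, hi⟩ := Finite.exists_max fun i => max (x i / y i) (y i / x i)
  obtain ⟨r, hr⟩ : ∃ r, r = max (x i / y i) (y i / x i) := ⟨_, rfl⟩
  rw [← hr] at hi
  have hxy : ∀ j, x j ≤ r * y j := fun j =>
    (div_le_iff₀ (py j)).1 ((le_max_left _ _).trans (hi j))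
  have hyx : ∀ j, y j ≤ r * x j := fun j =>
    (div_le_iff₀ (px j)).1 ((le_max_right _ _).trans (hi j))
  have hr1 : r ≤ 1 := by
    rcases max_choice (x i / y i) (y i / x i) with h | h
    · exact catF_ratio_le_one hD hx hy hfx hfy hyx
        ((div_eq_iff (py i).ne').1 (h.symm.trans hr.symm))
    · exact catF_ratio_le_one hD hy hx hfy hfx hxy
        ((div_eq_iff (px i).ne').1 (h.symm.trans hr.symm))
  funext j
  exact le_antisymm ((hxy j).trans (mul_le_of_le_one_left (hy j) hr1))
    ((hyx j).trans (mul_le_of_le_one_left (hx j) hr1))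

theorem stmt_17 (n : ℕ) (D : Fin n → Fin n → ℝ)
    (hD : ∀ i j, D i j = 0 ∨ D i j = 1)
    (S : Finset (Fin n))
    (hsep : ∀ i j : Fin n, (i ∈ S ∧ j ∉ S) ∨ (i ∉ S ∧ j ∈ S) → D i j = 0)
    (vstar : Fin n → ℝ) (hvstar : vstar ∈ Set.Icc (0 : Fin n → ℝ) 1)
    (hfixv : catF D vstar = vstar)
    (wstar : {x // x ∈ S} → ℝ) (hwstar : wstar ∈ Set.Icc (0 : {x // x ∈ S} → ℝ) 1)
    (hfixw : catF (fun i j : {x // x ∈ S} => D i j) wstar = wstar) :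
    (∀ i : {x // x ∈ S}, vstar i = wstar i) ∧
      ∀ i j : {x // x ∈ S}, vstar (j : Fin n) ≤ vstar (i : Fin n) ↔ wstar j ≤ wstar i := by
  have hD0 : ∀ i j, 0 ≤ D i j := fun i j => by
    rcases hD i j with h | h <;> simp [h]
  have hrestr : catF (fun i j : {x // x ∈ S} => D i j) (fun i => vstar i) =
      fun i : {x // x ∈ S} => vstar i := by
    funext i
    have hsum : ∑ j : {x // x ∈ S}, D i j * vstar j = ∑ j, D i j * vstar j := by
      rw [Finset.sum_coe_sort S fun j => D i j * vstar j]
      refine Finset.sum_subset (Finset.subset_univ S) fun j _ hj => ?_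
      rw [hsep i j (Or.inl ⟨i.2, hj⟩), zero_mul]
    have h := congrFun hfixv (i : Fin n)
    simp only [catF] at h ⊢
    rw [hsum, h]
  have key := catF_fixed_unique (fun i j : {x // x ∈ S} => hD0 i j)
    (fun i => hvstar.1 i) (fun i => hwstar.1 i) hrestr hfixw
  have h1 : ∀ i : {x // x ∈ S}, vstar i = wstar i := fun i => congrFun key i
  exact ⟨h1, fun i j => by rw [h1 i, h1 j]⟩
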